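/- Let f : ℝ → ℝ be infinitely differentiable with compact support and let 1 < p < ∞. Then lim_{n→∞} ‖χ_n · S_n f − f‖_{L^p(ℝ)} = 0. -/

import Mathlib

open MeasureTheory Filter Set

/-- The `k`-th Hermite function
`h_k(x) = (-1)^k π^{-1/4} 2^{-k/2} (k!)^{-1/2} e^{x²/2} (d^k/dx^k)(e^{-x²})`. -/
noncomputable def hermiteFun (k : ℕ) (x : ℝ) : ℝ :=
  (-1 : ℝ) ^ k *
    (Real.pi ^ (-(1 : ℝ) / 4) * (2 : ℝ) ^ (-(k : ℝ) / 2) *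
      ((k.factorial : ℝ)) ^ (-(1 : ℝ) / 2)) *
    Real.exp (x ^ 2 / 2) * iteratedDeriv k (fun y : ℝ => Real.exp (-y ^ 2)) x

/-- The `n`-th partial sum of the Hermite series of `f`:
`S_n f = ∑_{k=0}^n (∫ f h_k) h_k`. -/
noncomputable def hermitePartialSum (n : ℕ) (f : ℝ → ℝ) (x : ℝ) : ℝ :=
  ∑ k ∈ Finset.range (n + 1), (∫ y : ℝ, f y * hermiteFun k y) * hermiteFun k x

/-- The physicists' Hermite polynomials. -/
noncomputable def physHermite : ℕ → Polynomial ℝ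
  | 0 => 1
  | k + 1 => 2 * Polynomial.X * physHermite k - Polynomial.derivative (physHermite k)

/-- The normalizing constant of the `k`-th Hermite function. -/
noncomputable def hermiteConst (k : ℕ) : ℝ :=
  Real.pi ^ (-(1 : ℝ) / 4) * (2 : ℝ) ^ (-(k : ℝ) / 2) * ((k.factorial : ℝ)) ^ (-(1 : ℝ) / 2)

lemma derivative_physHermite (k : ℕ) :
    Polynomial.derivative (physHermite k) = 2 * (k : Polynomial ℝ) * physHermite (k - 1) := by
  induction k with
  | zero => simp [physHermite]
  | succ k ih =>
    rw [physHermite]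
    simp only [Polynomial.derivative_sub, Polynomial.derivative_mul, Polynomial.derivative_X,
      Polynomial.derivative_ofNat, Nat.add_sub_cancel]
    rw [ih]
    cases k with
    | zero => simp [physHermite]
    | succ k =>
      simp only [Polynomial.derivative_mul, Polynomial.derivative_ofNat,
        Polynomial.derivative_natCast, Nat.add_sub_cancel]
      rw [physHermite]
      push_cast
      ring

lemma iteratedDeriv_exp_neg_sq (k : ℕ) :
    iteratedDeriv k (fun y : ℝ => Real.exp (-y ^ 2)) =
      fun x => (-1) ^ k * (physHermite k).eval x * Real.exp (-x ^ 2) := by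
  induction k with
  | zero => simp [physHermite]
  | succ k ih =>
    rw [iteratedDeriv_succ, ih]
    ext x
    have h2 : HasDerivAt (fun x : ℝ => Real.exp (-x ^ 2)) (Real.exp (-x ^ 2) * -(2 * x)) x := by
      simpa using ((hasDerivAt_pow 2 x).neg).exp
    have := ((((physHermite k).hasDerivAt x).const_mul ((-1 : ℝ) ^ k)).mul h2).deriv
    refine Eq.trans this ?_
    simp only [physHermite, Polynomial.eval_sub, Polynomial.eval_mul, Polynomial.eval_ofNat,
      Polynomial.eval_X]
    ring

lemma hermiteFun_eq (k : ℕ) (x : ℝ) :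
    hermiteFun k x = hermiteConst k * ((physHermite k).eval x * Real.exp (-(1 / 2) * x ^ 2)) := by
  have h1 : ((-1 : ℝ)) ^ k * (-1) ^ k = 1 := by rw [← mul_pow]; simp
  have h2 : Real.exp (-(1 / 2) * x ^ 2) = Real.exp (x ^ 2 / 2) * Real.exp (-x ^ 2) := by
    rw [← Real.exp_add]; congr 1; ring
  rw [hermiteFun, iteratedDeriv_exp_neg_sq, h2, hermiteConst]
  linear_combination (Real.pi ^ (-(1 : ℝ) / 4) * (2 : ℝ) ^ (-(k : ℝ) / 2) *
    ((k.factorial : ℝ)) ^ (-(1 : ℝ) / 2) * Real.exp (x ^ 2 / 2) * (physHermite k).eval x *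
    Real.exp (-x ^ 2)) * h1

lemma hermiteConst_succ (k : ℕ) :
    hermiteConst k = √(2 * ((k + 1 : ℕ) : ℝ)) * hermiteConst (k + 1) := by
  have hk : (0 : ℝ) < (k + 1 : ℕ) := by positivity
  have hf : (0 : ℝ) < k.factorial := by positivity
  rw [hermiteConst, hermiteConst, Nat.factorial_succ, Nat.cast_mul,
    Real.mul_rpow hk.le hf.le, Real.sqrt_mul (by norm_num), Real.sqrt_eq_rpow, Real.sqrt_eq_rpow]
  have e1 : (2 : ℝ) ^ (-(k : ℝ) / 2) = 2 ^ ((1 : ℝ) / 2) * 2 ^ (-((k + 1 : ℕ) : ℝ) / 2) := by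
    rw [← Real.rpow_add (by norm_num)]; congr 1; push_cast; ring
  have e2 : (((k + 1 : ℕ) : ℝ)) ^ ((1 : ℝ) / 2) * ((k + 1 : ℕ) : ℝ) ^ (-(1 : ℝ) / 2) = 1 := by
    rw [← Real.rpow_add hk]; norm_num
  rw [e1]
  linear_combination (-(Real.pi ^ (-(1 : ℝ) / 4) * 2 ^ ((1 : ℝ) / 2) *
    2 ^ (-((k + 1 : ℕ) : ℝ) / 2) * (k.factorial : ℝ) ^ (-(1 : ℝ) / 2))) * e2

lemma hasDerivAt_exp_neg_half_sq (x : ℝ) :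
    HasDerivAt (fun x : ℝ => Real.exp (-(1 / 2) * x ^ 2))
      (-x * Real.exp (-(1 / 2) * x ^ 2)) x := by
  have := ((hasDerivAt_pow 2 x).const_mul (-(1 / 2) : ℝ)).exp
  convert this using 1
  norm_num
  ring

/-- Action of the annihilation operator on Hermite functions. -/
lemma hasDerivAt_hermiteFun (k : ℕ) (x : ℝ) :
    HasDerivAt (hermiteFun k)
      (√(2 * (k : ℝ)) * hermiteFun (k - 1) x - x * hermiteFun k x) x := by
  have h := (((physHermite k).hasDerivAt x).mul (hasDerivAt_exp_neg_half_sq x)).const_mul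
    (hermiteConst k)
  have e : hermiteFun k = fun x =>
      hermiteConst k * ((physHermite k).eval x * Real.exp (-(1 / 2) * x ^ 2)) :=
    funext (hermiteFun_eq k)
  rw [e]
  refine HasDerivAt.congr_deriv h ?_
  rw [derivative_physHermite, hermiteFun_eq]
  cases k with
  | zero => simp; ring
  | succ k =>
    simp only [Nat.add_sub_cancel, hermiteConst_succ k, Polynomial.eval_mul,
      Polynomial.eval_ofNat, Polynomial.eval_natCast]
    have := Real.mul_self_sqrt (show (0 : ℝ) ≤ 2 * ((k + 1 : ℕ) : ℝ) by positivity)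
    linear_combination (-hermiteConst (k + 1) * (physHermite k).eval x *
      Real.exp (-(1 / 2) * x ^ 2)) * this

/-- The three-term recurrence of Hermite functions. -/
lemma mul_hermiteFun (k : ℕ) (x : ℝ) :
    2 * (x * hermiteFun k x) = √(2 * ((k + 1 : ℕ) : ℝ)) * hermiteFun (k + 1) x +
      √(2 * (k : ℝ)) * hermiteFun (k - 1) x := by
  have h : √(2 * (k : ℝ)) * hermiteConst (k - 1) * (physHermite (k - 1)).eval x =
      hermiteConst k * (Polynomial.derivative (physHermite k)).eval x := by
    rw [derivative_physHermite]
    cases k with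
    | zero => simp
    | succ k =>
      simp only [Nat.add_sub_cancel, hermiteConst_succ k, Polynomial.eval_mul,
        Polynomial.eval_ofNat, Polynomial.eval_natCast]
      have := Real.mul_self_sqrt (show (0 : ℝ) ≤ 2 * ((k + 1 : ℕ) : ℝ) by positivity)
      linear_combination (hermiteConst (k + 1) * (physHermite k).eval x) * this
  rw [hermiteFun_eq, hermiteFun_eq, hermiteFun_eq, physHermite, hermiteConst_succ k]
  rw [hermiteConst_succ k] at h
  simp only [Polynomial.eval_sub, Polynomial.eval_mul, Polynomial.eval_ofNat, Polynomial.eval_X]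
  linear_combination -Real.exp (-(1 / 2) * x ^ 2) * h

lemma exists_abs_eval_mul_exp_le (P : Polynomial ℝ) {b : ℝ} (hb : 0 < b) :
    ∃ C, ∀ x : ℝ, |P.eval x * Real.exp (-b * x ^ 2)| ≤ C := by
  induction P using Polynomial.induction_on' with
  | add p q hp hq =>
    obtain ⟨C, hC⟩ := hp
    obtain ⟨D, hD⟩ := hq
    refine ⟨C + D, fun x => ?_⟩
    rw [Polynomial.eval_add, add_mul]
    exact (abs_add_le _ _).trans (add_le_add (hC x) (hD x))
  | monomial n a =>
    refine ⟨|a| * (1 + n.factorial / b ^ n), fun x => ?_⟩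
    have h1 : |x| ^ n ≤ 1 + (x ^ 2) ^ n := by
      rw [← sq_abs, ← pow_mul, mul_comm, pow_mul]
      nlinarith [sq_nonneg (|x| ^ n - 1)]
    have hx : 0 ≤ b * x ^ 2 := by positivity
    have h2 : (x ^ 2) ^ n ≤ n.factorial / b ^ n * Real.exp (b * x ^ 2) := by
      have := Real.pow_div_factorial_le_exp (b * x ^ 2) hx n
      rw [div_le_iff₀ (by positivity), mul_pow] at this
      rw [div_mul_eq_mul_div, le_div_iff₀ (by positivity)]
      linarith
    have h3 : 1 ≤ Real.exp (b * x ^ 2) := Real.one_le_exp hx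
    have h4 : Real.exp (b * x ^ 2) * Real.exp (-b * x ^ 2) = 1 := by
      rw [← Real.exp_add]; simp
    rw [Polynomial.eval_monomial, abs_mul, abs_mul, abs_pow, Real.abs_exp, mul_assoc]
    refine mul_le_mul_of_nonneg_left ?_ (abs_nonneg a)
    calc |x| ^ n * Real.exp (-b * x ^ 2)
        ≤ ((1 + n.factorial / b ^ n) * Real.exp (b * x ^ 2)) * Real.exp (-b * x ^ 2) := by
          gcongr
          linarith
      _ = _ := by rw [mul_assoc, h4, mul_one]

lemma integrable_eval_mul_exp (P : Polynomial ℝ) {b : ℝ} (hb : 0 < b) :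
    Integrable fun x : ℝ => P.eval x * Real.exp (-b * x ^ 2) := by
  obtain ⟨C, hC⟩ := exists_abs_eval_mul_exp_le P (half_pos hb)
  have h := (integrable_exp_neg_mul_sq (half_pos hb)).bdd_mul (c := C)
    (f := fun x => P.eval x * Real.exp (-(b / 2) * x ^ 2)) (by fun_prop)
    (Eventually.of_forall hC)
  refine h.congr (Eventually.of_forall fun x => ?_)
  simp only
  rw [mul_assoc, ← Real.exp_add]
  congr 2
  ring

lemma continuous_hermiteFun (k : ℕ) : Continuous (hermiteFun k) :=
  continuous_iff_continuousAt.2 fun x => (hasDerivAt_hermiteFun k x).continuousAt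

lemma exists_abs_pow_mul_hermiteFun_le (n k : ℕ) :
    ∃ C, ∀ x : ℝ, |x ^ n * hermiteFun k x| ≤ C := by
  obtain ⟨C, hC⟩ := exists_abs_eval_mul_exp_le
    (Polynomial.C (hermiteConst k) * Polynomial.X ^ n * physHermite k)
    (show (0 : ℝ) < 1 / 2 by norm_num)
  refine ⟨C, fun x => (le_of_eq ?_).trans (hC x)⟩
  rw [hermiteFun_eq]
  simp only [Polynomial.eval_mul, Polynomial.eval_C, Polynomial.eval_pow, Polynomial.eval_X]
  congr 1
  ring

lemma integrable_pow_mul_hermiteFun (n k : ℕ) :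
    Integrable fun x : ℝ => x ^ n * hermiteFun k x := by
  refine (integrable_eval_mul_exp
    (Polynomial.C (hermiteConst k) * Polynomial.X ^ n * physHermite k)
    (show (0 : ℝ) < 1 / 2 by norm_num)).congr (Eventually.of_forall fun x => ?_)
  simp only [Polynomial.eval_mul, Polynomial.eval_C, Polynomial.eval_pow, Polynomial.eval_X]
  rw [hermiteFun_eq]
  ring

lemma integrable_bdd_mul_pow_mul_hermiteFun {u : ℝ → ℝ} (hu : Continuous u) {C : ℝ}
    (hC : ∀ x, |u x| ≤ C) (n k : ℕ) : Integrable fun x => u x * (x ^ n * hermiteFun k x) :=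
  (integrable_pow_mul_hermiteFun n k).bdd_mul (c := C) hu.aestronglyMeasurable
    (Eventually.of_forall hC)

lemma integrable_bdd_mul_hermiteFun {u : ℝ → ℝ} (hu : Continuous u) {C : ℝ}
    (hC : ∀ x, |u x| ≤ C) (k : ℕ) : Integrable fun x => u x * hermiteFun k x := by
  simpa using integrable_bdd_mul_pow_mul_hermiteFun hu hC 0 k

/-- The creation operator is adjoint to the annihilation operator. -/
lemma integral_mul_hermiteFun_succ {u u' : ℝ → ℝ} (hu : ∀ x, HasDerivAt u (u' x) x)
    (hu' : Continuous u') {C D : ℝ} (hC : ∀ x, |u x| ≤ C) (hD : ∀ x, |u' x| ≤ D) (k : ℕ) :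
    √(2 * ((k + 1 : ℕ) : ℝ)) * ∫ x, u x * hermiteFun (k + 1) x =
      ∫ x, (x * u x + u' x) * hermiteFun k x := by
  have hcu : Continuous u := continuous_iff_continuousAt.2 fun x => (hu x).continuousAt
  have i0 := integrable_bdd_mul_hermiteFun hcu hC k
  have i1 : Integrable fun x => u x * (x * hermiteFun k x) := by
    simpa using integrable_bdd_mul_pow_mul_hermiteFun hcu hC 1 k
  have i2 := integrable_bdd_mul_hermiteFun hcu hC (k + 1)
  have i3 := integrable_bdd_mul_hermiteFun hu' hD k
  have hd : ∀ x, HasDerivAt (hermiteFun k)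
      (x * hermiteFun k x - √(2 * ((k + 1 : ℕ) : ℝ)) * hermiteFun (k + 1) x) x := fun x =>
    (hasDerivAt_hermiteFun k x).congr_deriv (by linear_combination -mul_hermiteFun k x)
  have i4 : Integrable (u * fun x =>
      x * hermiteFun k x - √(2 * ((k + 1 : ℕ) : ℝ)) * hermiteFun (k + 1) x) := by
    refine (i1.sub (i2.const_mul √(2 * ((k + 1 : ℕ) : ℝ)))).congr
      (Eventually.of_forall fun x => ?_)
    simp only [Pi.sub_apply, Pi.mul_apply]
    ring
  have ibp := integral_mul_deriv_eq_deriv_mul_of_integrable (fun x _ => hu x) (fun x _ => hd x)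
    i4 i3 i0
  rw [← integral_const_mul]
  have e1 : ∫ x, (x * u x + u' x) * hermiteFun k x =
      (∫ x, u x * (x * hermiteFun k x)) + ∫ x, u' x * hermiteFun k x := by
    rw [← integral_add i1 i3]
    congr 1; ext x; ring
  have e2 : ∫ x, u x * (x * hermiteFun k x -
        √(2 * ((k + 1 : ℕ) : ℝ)) * hermiteFun (k + 1) x) =
      (∫ x, u x * (x * hermiteFun k x)) -
        ∫ x, √(2 * ((k + 1 : ℕ) : ℝ)) * (u x * hermiteFun (k + 1) x) := by
    rw [← integral_sub i1 (i2.const_mul _)]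
    congr 1; ext x; ring
  linarith

lemma exists_abs_hermiteFun_le (k : ℕ) : ∃ C, ∀ x : ℝ, |hermiteFun k x| ≤ C := by
  simpa using exists_abs_pow_mul_hermiteFun_le 0 k

lemma integrable_hermiteFun_mul (j k : ℕ) :
    Integrable fun x => hermiteFun j x * hermiteFun k x := by
  obtain ⟨C, hC⟩ := exists_abs_hermiteFun_le j
  exact integrable_bdd_mul_hermiteFun (continuous_hermiteFun j) hC k

lemma integral_hermiteFun_mul_succ (j k : ℕ) :
    √(2 * ((k + 1 : ℕ) : ℝ)) * ∫ x, hermiteFun j x * hermiteFun (k + 1) x =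
      √(2 * (j : ℝ)) * ∫ x, hermiteFun (j - 1) x * hermiteFun k x := by
  obtain ⟨C, hC⟩ := exists_abs_hermiteFun_le j
  obtain ⟨C₁, hC₁⟩ := exists_abs_hermiteFun_le (j - 1)
  obtain ⟨C₂, hC₂⟩ := exists_abs_pow_mul_hermiteFun_le 1 j
  have hc := continuous_hermiteFun
  rw [integral_mul_hermiteFun_succ (hasDerivAt_hermiteFun j)
    ((continuous_const.mul (hc (j - 1))).sub (continuous_id.mul (hc j))) hC
    (D := √(2 * (j : ℝ)) * C₁ + C₂) (fun x => ?_) k, ← integral_const_mul]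
  · congr 1; ext x; ring
  · refine (abs_sub _ _).trans (add_le_add ?_ (by simpa using hC₂ x))
    rw [abs_mul, abs_of_nonneg (Real.sqrt_nonneg _)]
    exact mul_le_mul_of_nonneg_left (hC₁ x) (Real.sqrt_nonneg _)

lemma integral_hermiteFun_zero_sq : ∫ x, hermiteFun 0 x * hermiteFun 0 x = 1 := by
  have e : ∀ x, hermiteFun 0 x * hermiteFun 0 x =
      Real.pi ^ (-(1 : ℝ) / 2) * Real.exp (-1 * x ^ 2) := fun x => by
    have h1 : Real.exp (-1 * x ^ 2) =
        Real.exp (-(1 / 2) * x ^ 2) * Real.exp (-(1 / 2) * x ^ 2) := by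
      rw [← Real.exp_add]; congr 1; ring
    have h2 : Real.pi ^ (-(1 : ℝ) / 2) = Real.pi ^ (-(1 : ℝ) / 4) * Real.pi ^ (-(1 : ℝ) / 4) := by
      rw [← Real.rpow_add Real.pi_pos]; congr 1; ring
    rw [hermiteFun_eq, h1, h2]
    simp [hermiteConst, physHermite]
    ring
  simp_rw [e]
  rw [integral_const_mul, integral_gaussian, div_one, Real.sqrt_eq_rpow,
    ← Real.rpow_add Real.pi_pos]
  norm_num

/-- Hermite functions are orthonormal. -/
lemma integral_hermiteFun_mul (j k : ℕ) :
    ∫ x, hermiteFun j x * hermiteFun k x = if j = k then 1 else 0 := by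
  have hpos : ∀ m : ℕ, √(2 * ((m + 1 : ℕ) : ℝ)) ≠ 0 := fun m =>
    (Real.sqrt_pos.2 (by positivity)).ne'
  induction k generalizing j with
  | zero =>
    cases j with
    | zero => simpa using integral_hermiteFun_zero_sq
    | succ j =>
      have h := integral_hermiteFun_mul_succ 0 j
      simp only [Nat.cast_zero, mul_zero, Real.sqrt_zero, zero_mul, mul_eq_zero, hpos j,
        false_or] at h
      simpa [mul_comm] using h
  | succ k ih =>
    have h := integral_hermiteFun_mul_succ j k
    cases j with
    | zero => simpa [hpos k, -Nat.cast_add] using h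
    | succ j =>
      rw [Nat.add_sub_cancel, ih] at h
      by_cases hjk : j = k
      · subst hjk
        simpa [hpos j, -Nat.cast_add] using h
      · simpa [hpos k, hjk, -Nat.cast_add] using h

lemma abs_integral_mul_hermiteFun_le {u : ℝ → ℝ} (hu : Integrable fun x => u x ^ 2) (k : ℕ) :
    |∫ x, u x * hermiteFun k x| ≤ (∫ x, u x ^ 2) + 1 := by
  have h1 : ∫ x, hermiteFun k x * hermiteFun k x = 1 := by simp [integral_hermiteFun_mul]
  rw [← h1, ← integral_add hu (integrable_hermiteFun_mul k k)]
  rw [← Real.norm_eq_abs]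
  refine norm_integral_le_of_norm_le (hu.add (integrable_hermiteFun_mul k k))
    (Eventually.of_forall fun x => ?_)
  rw [Real.norm_eq_abs, abs_le]
  constructor <;> nlinarith [sq_nonneg (u x + hermiteFun k x), sq_nonneg (u x - hermiteFun k x),
    sq_nonneg (u x), sq_nonneg (hermiteFun k x)]

/-- Hermite coefficients of a test function decay rapidly. -/
lemma exists_abs_integral_mul_hermiteFun_mul_pow_le (m : ℕ) (u : ℝ → ℝ)
    (hu : ContDiff ℝ (⊤ : ℕ∞) u) (hs : HasCompactSupport u) :
    ∃ C, ∀ k : ℕ, |∫ x, u x * hermiteFun k x| * √((k + 1 : ℕ) : ℝ) ^ m ≤ C := by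
  induction m generalizing u with
  | zero =>
    refine ⟨(∫ x, u x ^ 2) + 1, fun k => ?_⟩
    rw [pow_zero, mul_one]
    have hs2 : HasCompactSupport fun x => u x ^ 2 :=
      hs.comp_left (g := fun y : ℝ => y ^ 2) (by simp)
    exact abs_integral_mul_hermiteFun_le
      ((hu.continuous.pow 2).integrable_of_hasCompactSupport hs2) k
  | succ m ih =>
    have hdiff : ∀ x, HasDerivAt u (deriv u x) x := fun x =>
      (hu.differentiable (by simp) x).hasDerivAt
    have hd : ContDiff ℝ (⊤ : ℕ∞) (deriv u) := (contDiff_infty_iff_deriv.1 hu).2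
    obtain ⟨A, hA⟩ := hs.exists_bound_of_continuous hu.continuous
    obtain ⟨B, hB⟩ := hs.deriv.exists_bound_of_continuous hd.continuous
    have hsx : HasCompactSupport fun x => x * u x := hs.mul_left
    obtain ⟨C, hC⟩ := ih (fun x => x * u x + deriv u x) ((contDiff_id.mul hu).add hd)
      (hsx.add hs.deriv)
    refine ⟨max |∫ x, u x * hermiteFun 0 x| (2 ^ m * C), fun k => ?_⟩
    cases k with
    | zero => simp
    | succ k =>
      refine le_max_of_le_right ?_
      have key := integral_mul_hermiteFun_succ hdiff hd.continuous hA hB k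
      have h1 : √((k + 1 + 1 : ℕ) : ℝ) ≤ √(2 * ((k + 1 : ℕ) : ℝ)) :=
        Real.sqrt_le_sqrt (by push_cast; linarith [(Nat.cast_nonneg k : (0 : ℝ) ≤ k)])
      have h2 : √((k + 1 + 1 : ℕ) : ℝ) ≤ 2 * √((k + 1 : ℕ) : ℝ) := by
        refine h1.trans ?_
        rw [Real.sqrt_mul (by norm_num)]
        gcongr
        exact (Real.sqrt_le_left (by norm_num)).2 (by norm_num)
      calc |∫ x, u x * hermiteFun (k + 1) x| * √((k + 1 + 1 : ℕ) : ℝ) ^ (m + 1)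
          ≤ |∫ x, u x * hermiteFun (k + 1) x| *
            ((2 * √((k + 1 : ℕ) : ℝ)) ^ m * √(2 * ((k + 1 : ℕ) : ℝ))) := by
            rw [pow_succ]; gcongr
        _ = 2 ^ m * (|√(2 * ((k + 1 : ℕ) : ℝ)) * ∫ x, u x * hermiteFun (k + 1) x| *
            √((k + 1 : ℕ) : ℝ) ^ m) := by
            rw [abs_mul, abs_of_nonneg (Real.sqrt_nonneg _), mul_pow]; ring
        _ ≤ 2 ^ m * C := by
            rw [key]
            exact mul_le_mul_of_nonneg_left (hC k) (by positivity)

lemma tendsto_hermiteFun_mul_self_atBot (k : ℕ) :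
    Tendsto (fun x => hermiteFun k x * hermiteFun k x) atBot (nhds 0) := by
  obtain ⟨C, hC⟩ := exists_abs_pow_mul_hermiteFun_le 1 k
  obtain ⟨D, hD⟩ := exists_abs_hermiteFun_le k
  have h : Tendsto (fun x : ℝ => (C * D) * |x|⁻¹) atBot (nhds 0) := by
    simpa using (tendsto_abs_atBot_atTop.inv_tendsto_atTop).const_mul (C * D)
  refine squeeze_zero_norm' ?_ h
  filter_upwards [eventually_lt_atBot 0] with x hx
  rw [← div_eq_mul_inv, le_div_iff₀ (abs_pos.2 hx.ne), Real.norm_eq_abs, abs_mul]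
  have h1 := hC x
  rw [pow_one, abs_mul] at h1
  have := mul_le_mul h1 (hD x) (abs_nonneg _) ((by positivity : 0 ≤ |x| * |hermiteFun k x|).trans h1)
  linarith

lemma abs_hermiteFun_le (k : ℕ) (x : ℝ) : |hermiteFun k x| ≤ 2 * √((k + 1 : ℕ) : ℝ) := by
  set h' : ℝ → ℝ := fun x => √(2 * (k : ℝ)) * hermiteFun (k - 1) x - x * hermiteFun k x with hh'
  set W : ℝ → ℝ := fun x => k * (hermiteFun (k - 1) x * hermiteFun (k - 1) x) +
    (k + 1) * (hermiteFun (k + 1) x * hermiteFun (k + 1) x) +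
    hermiteFun k x * hermiteFun k x with hW
  have iW : Integrable W :=
    (((integrable_hermiteFun_mul _ _).const_mul _).add
      ((integrable_hermiteFun_mul _ _).const_mul _)).add (integrable_hermiteFun_mul _ _)
  have eW : ∫ x, W x = 2 * (k + 1) := by
    have i1 := (integrable_hermiteFun_mul (k - 1) (k - 1)).const_mul (k : ℝ)
    have i2 := (integrable_hermiteFun_mul (k + 1) (k + 1)).const_mul ((k : ℝ) + 1)
    have e := (integral_add (i1.add i2) (integrable_hermiteFun_mul k k)).trans
      (congrArg (· + _) (integral_add i1 i2))
    refine e.trans ?_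
    rw [integral_const_mul, integral_const_mul]
    simp [integral_hermiteFun_mul]
    ring
  have hbound : ∀ y, |h' y * hermiteFun k y + hermiteFun k y * h' y| ≤ W y := fun y => by
    have h1 := mul_hermiteFun k y
    have ha := Real.mul_self_sqrt (show (0 : ℝ) ≤ 2 * (k : ℝ) by positivity)
    have hb := Real.mul_self_sqrt (show (0 : ℝ) ≤ 2 * ((k + 1 : ℕ) : ℝ) by positivity)
    set a := √(2 * (k : ℝ))
    set b := √(2 * ((k + 1 : ℕ) : ℝ))
    have h2 : 2 * h' y = a * hermiteFun (k - 1) y - b * hermiteFun (k + 1) y := by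
      simp only [hh']; linarith
    have h3 : W y = (a * hermiteFun (k - 1) y) ^ 2 / 2 + (b * hermiteFun (k + 1) y) ^ 2 / 2 +
        hermiteFun k y ^ 2 := by
      simp only [hW]
      push_cast at hb
      linear_combination (-(1 / 2) * hermiteFun (k - 1) y ^ 2) * ha -
        (1 / 2 * hermiteFun (k + 1) y ^ 2) * hb
    have h4 : h' y ^ 2 ≤ (a * hermiteFun (k - 1) y) ^ 2 / 2 +
        (b * hermiteFun (k + 1) y) ^ 2 / 2 := by
      have : h' y = (a * hermiteFun (k - 1) y - b * hermiteFun (k + 1) y) / 2 := by linarith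
      rw [this]
      nlinarith [sq_nonneg (a * hermiteFun (k - 1) y + b * hermiteFun (k + 1) y)]
    rw [abs_le]
    constructor <;> nlinarith [sq_nonneg (h' y - hermiteFun k y), sq_nonneg (h' y + hermiteFun k y)]
  have hc : Continuous h' := (continuous_const.mul (continuous_hermiteFun _)).sub
    (continuous_id.mul (continuous_hermiteFun k))
  have hc' := continuous_hermiteFun k
  have iD : Integrable fun y => h' y * hermiteFun k y + hermiteFun k y * h' y :=
    iW.mono' (by fun_prop) (Eventually.of_forall hbound)
  have ftc := integral_Iic_of_hasDerivAt_of_tendsto' (a := x)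
    (fun y _ => (hasDerivAt_hermiteFun k y).mul (hasDerivAt_hermiteFun k y)) iD.integrableOn
    (tendsto_hermiteFun_mul_self_atBot k)
  have hsq : hermiteFun k x * hermiteFun k x ≤ 2 * (k + 1) := by
    calc hermiteFun k x * hermiteFun k x
        = ∫ y in Iic x, (h' y * hermiteFun k y + hermiteFun k y * h' y) := by
          rw [ftc]; simp
      _ ≤ ∫ y in Iic x, W y := integral_mono iD.integrableOn iW.integrableOn
          fun y => (le_abs_self _).trans (hbound y)
      _ ≤ ∫ y, W y := setIntegral_le_integral iW
          (Eventually.of_forall fun y => (abs_nonneg _).trans (hbound y))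
      _ = _ := eW
  refine abs_le_of_sq_le_sq ?_ (by positivity)
  rw [mul_pow, Real.sq_sqrt (by positivity)]
  push_cast
  nlinarith [(Nat.cast_nonneg k : (0 : ℝ) ≤ k)]

/-- Hermite functions are complete. -/
lemma eq_zero_of_integral_mul_hermiteFun_eq_zero {v : ℝ → ℝ} (hv : Continuous v) {C : ℝ}
    (hC : ∀ x, |v x| ≤ C) (h0 : ∀ k, ∫ x, v x * hermiteFun k x = 0) : v = 0 := by
  have hmom : ∀ n k, ∫ x, v x * (x ^ n * hermiteFun k x) = 0 := by
    intro n
    induction n with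
    | zero => simpa using h0
    | succ n ih =>
      intro k
      have i1 := (integrable_bdd_mul_pow_mul_hermiteFun hv hC n (k + 1)).const_mul
        (√(2 * ((k + 1 : ℕ) : ℝ)) / 2)
      have i2 := (integrable_bdd_mul_pow_mul_hermiteFun hv hC n (k - 1)).const_mul
        (√(2 * (k : ℝ)) / 2)
      have e := integral_add i1 i2
      rw [integral_const_mul, integral_const_mul, ih, ih, mul_zero, mul_zero, add_zero] at e
      rw [← e]
      congr 1
      ext x
      linear_combination (v x * x ^ n / 2) * mul_hermiteFun k x
  set F : ℝ → ℂ := fun x => ((v x * hermiteFun 0 x : ℝ) : ℂ) with hF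
  have hFc : Continuous F :=
    Complex.continuous_ofReal.comp (hv.mul (continuous_hermiteFun 0))
  have hFi : Integrable F := (integrable_bdd_mul_hermiteFun hv hC 0).ofReal
  have hdom : ∀ t : ℝ, Integrable fun x => Real.exp |t * x| * ‖F x‖ := by
    intro t
    have hg : Integrable fun x : ℝ =>
        Real.exp (t ^ 2) * (C * |hermiteConst 0|) * Real.exp (-(1 / 4) * x ^ 2) :=
      (integrable_exp_neg_mul_sq (by norm_num)).const_mul _
    refine hg.mono' (by fun_prop) (Eventually.of_forall fun x => ?_)
    have hF1 : ‖F x‖ ≤ C * |hermiteConst 0| * Real.exp (-(1 / 2) * x ^ 2) := by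
      rw [hF, Complex.norm_real, Real.norm_eq_abs, abs_mul, hermiteFun_eq, abs_mul, abs_mul,
        Real.abs_exp, mul_assoc]
      simp only [physHermite, Polynomial.eval_one, abs_one, one_mul]
      gcongr
      exact hC x
    have hF2 : Real.exp |t * x| ≤ Real.exp (t ^ 2) * Real.exp (1 / 4 * x ^ 2) := by
      rw [← Real.exp_add, Real.exp_le_exp, abs_le]
      constructor <;> nlinarith [sq_nonneg (t + x / 2), sq_nonneg (t - x / 2)]
    have hF3 : Real.exp (-(1 / 4) * x ^ 2) =
        Real.exp (1 / 4 * x ^ 2) * Real.exp (-(1 / 2) * x ^ 2) := by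
      rw [← Real.exp_add]; congr 1; ring
    rw [Real.norm_of_nonneg (by positivity)]
    refine (mul_le_mul hF2 hF1 (norm_nonneg _) (by positivity)).trans_eq ?_
    rw [hF3]
    ring
  have hFour : FourierTransform.fourier F = 0 := by
    ext w
    rw [Real.fourier_real_eq_integral_exp_smul]
    set z : ℂ := ((-2 * Real.pi * w : ℝ) : ℂ) * Complex.I with hz
    have hzn : ‖z‖ = |-2 * Real.pi * w| := by
      rw [hz, norm_mul, Complex.norm_I, mul_one, Complex.norm_real, Real.norm_eq_abs]
    have hexp : ∀ x : ℝ, HasSum (fun n : ℕ => |-2 * Real.pi * w * x| ^ n / n.factorial * ‖F x‖)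
        (Real.exp |-2 * Real.pi * w * x| * ‖F x‖) := fun x => by
      have := NormedSpace.expSeries_div_hasSum_exp (𝔸 := ℝ) |-2 * Real.pi * w * x|
      rw [← Real.exp_eq_exp_ℝ] at this
      exact this.mul_right _
    have hs := hasSum_integral_of_dominated_convergence (μ := volume)
      (F := fun (n : ℕ) (x : ℝ) => (z * x) ^ n / n.factorial * F x)
      (f := fun x => Complex.exp (z * x) * F x)
      (fun n x => |-2 * Real.pi * w * x| ^ n / n.factorial * ‖F x‖)
      (fun n => by fun_prop)
      (fun n => Eventually.of_forall fun x => by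
        rw [norm_mul, norm_div, norm_pow, norm_mul, hzn, Complex.norm_real, Real.norm_eq_abs,
          ← abs_mul, Complex.norm_natCast])
      (Eventually.of_forall fun x => (hexp x).summable)
      ((hdom (-2 * Real.pi * w)).congr (Eventually.of_forall fun x => (hexp x).tsum_eq.symm))
      (Eventually.of_forall fun x => by
        have := NormedSpace.expSeries_div_hasSum_exp (𝔸 := ℂ) (z * x)
        rw [← Complex.exp_eq_exp_ℂ] at this
        exact this.mul_right _)
    have hz0 : ∀ n : ℕ, ∫ x : ℝ, (z * x) ^ n / n.factorial * F x = 0 := fun n => by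
      have : ∀ x : ℝ, (z * x) ^ n / n.factorial * F x =
          z ^ n / n.factorial * ((v x * (x ^ n * hermiteFun 0 x) : ℝ) : ℂ) := fun x => by
        simp only [hF]
        push_cast
        ring
      simp_rw [this]
      rw [integral_const_mul, integral_complex_ofReal, hmom]
      simp
    simp_rw [hz0] at hs
    rw [Pi.zero_apply, ← hs.unique hasSum_zero]
    congr 1
    ext x
    rw [smul_eq_mul, hz]
    congr 2
    push_cast
    ring
  have hinv := hFc.fourierInv_fourier_eq hFi (by rw [hFour]; exact integrable_zero _ _ _)
  ext x
  have hx : F x = 0 := by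
    rw [← hinv, hFour, Real.fourierInv_eq']
    simp
  have hne : hermiteFun 0 x ≠ 0 := by
    rw [hermiteFun_eq]
    have h1 : hermiteConst 0 ≠ 0 := by
      simp only [hermiteConst]
      have := Real.pi_pos
      positivity
    simp [physHermite, h1]
  have hx' : v x * hermiteFun 0 x = 0 := by
    simpa only [hF, Complex.ofReal_eq_zero] using hx
  simpa [hne] using hx'

lemma summable_div_succ_pow (C : ℝ) {m : ℕ} (hm : 1 < m) :
    Summable fun k : ℕ => C / ((k + 1 : ℕ) : ℝ) ^ m := by
  have h := (summable_nat_add_iff 1).2 (Real.summable_one_div_nat_pow.2 hm)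
  simpa only [mul_one_div] using h.mul_left C

lemma exists_abs_hermite_term_le {f : ℝ → ℝ} (hf : ContDiff ℝ (⊤ : ℕ∞) f)
    (hs : HasCompactSupport f) :
    ∃ C, ∀ (k : ℕ) (x : ℝ), |(∫ y, f y * hermiteFun k y) * hermiteFun k x| ≤
      C / ((k + 1 : ℕ) : ℝ) ^ 3 := by
  obtain ⟨C, hC⟩ := exists_abs_integral_mul_hermiteFun_mul_pow_le 7 f hf hs
  refine ⟨2 * C, fun k x => ?_⟩
  have hk : (0 : ℝ) ≤ ((k + 1 : ℕ) : ℝ) := by positivity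
  rw [le_div_iff₀ (by positivity), abs_mul]
  have h6 : ((k + 1 : ℕ) : ℝ) ^ 3 = √((k + 1 : ℕ) : ℝ) ^ 6 := by
    rw [show 6 = 2 * 3 from rfl, pow_mul, Real.sq_sqrt hk]
  calc _ ≤ |∫ y, f y * hermiteFun k y| * (2 * √((k + 1 : ℕ) : ℝ)) * ((k + 1 : ℕ) : ℝ) ^ 3 := by
        gcongr
        exact abs_hermiteFun_le k x
    _ = 2 * (|∫ y, f y * hermiteFun k y| * √((k + 1 : ℕ) : ℝ) ^ 7) := by rw [h6]; ring
    _ ≤ 2 * C := by linarith [hC k]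

/-- The Hermite series of a test function converges pointwise to the function. -/
lemma hasSum_hermite {f : ℝ → ℝ} (hf : ContDiff ℝ (⊤ : ℕ∞) f) (hs : HasCompactSupport f) (x : ℝ) :
    HasSum (fun k => (∫ y, f y * hermiteFun k y) * hermiteFun k x) (f x) := by
  obtain ⟨C, hC⟩ := exists_abs_hermite_term_le hf hs
  obtain ⟨A, hA⟩ := hs.exists_bound_of_continuous hf.continuous
  have hsum := summable_div_succ_pow C (show 1 < 3 by norm_num)
  set c : ℕ → ℝ := fun k => ∫ y, f y * hermiteFun k y with hc
  set g : ℝ → ℝ := fun x => ∑' k, c k * hermiteFun k x with hg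
  have hg1 : ∀ x, HasSum (fun k => c k * hermiteFun k x) (g x) := fun x =>
    (Summable.of_norm_bounded hsum fun k => hC k x).hasSum
  have hgc : Continuous g := continuous_tsum
    (fun k => continuous_const.mul (continuous_hermiteFun k)) hsum hC
  have hgb : ∀ x, |g x| ≤ ∑' k : ℕ, C / ((k + 1 : ℕ) : ℝ) ^ 3 := fun x => by
    rw [← Real.norm_eq_abs]
    exact tsum_of_norm_bounded hsum.hasSum fun k => hC k x
  have hcoef : ∀ j, ∫ x, g x * hermiteFun j x = c j := fun j => by
    have hb := fun x : ℝ => hsum.hasSum.mul_right |hermiteFun j x|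
    have := hasSum_integral_of_dominated_convergence (μ := volume)
      (F := fun (k : ℕ) (x : ℝ) => c k * hermiteFun k x * hermiteFun j x)
      (f := fun x => g x * hermiteFun j x)
      (fun k x => C / ((k + 1 : ℕ) : ℝ) ^ 3 * |hermiteFun j x|)
      (fun k => ((continuous_const.mul (continuous_hermiteFun k)).mul
        (continuous_hermiteFun j)).aestronglyMeasurable)
      (fun k => Eventually.of_forall fun x => by
        rw [norm_mul]
        exact mul_le_mul_of_nonneg_right (hC k x) (abs_nonneg _))
      (Eventually.of_forall fun x => (hb x).summable)
      (by
        simp_rw [fun x => (hb x).tsum_eq]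
        have := (integrable_pow_mul_hermiteFun 0 j).abs
        simp only [pow_zero, one_mul] at this
        exact this.const_mul _)
      (Eventually.of_forall fun x => (hg1 x).mul_right _)
    have e : ∀ k, ∫ x, c k * hermiteFun k x * hermiteFun j x = if k = j then c j else 0 := by
      intro k
      simp_rw [mul_assoc]
      rw [integral_const_mul, integral_hermiteFun_mul]
      split_ifs with hk <;> simp [hk]
    simp_rw [e] at this
    exact this.unique (hasSum_ite_eq j (c j))
  have hfg := eq_zero_of_integral_mul_hermiteFun_eq_zero (v := fun x => f x - g x)
    (hf.continuous.sub hgc) (fun x => (abs_sub _ _).trans (add_le_add (hA x) (hgb x)))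
    (fun k => by
      simp_rw [sub_mul]
      rw [integral_sub (integrable_bdd_mul_hermiteFun hf.continuous hA k)
        (integrable_bdd_mul_hermiteFun hgc hgb k), hcoef, sub_self])
  have := hg1 x
  rwa [← sub_eq_zero.1 (congrFun hfg x)] at this

lemma exists_abs_hermitePartialSum_sub_le {f : ℝ → ℝ} (hf : ContDiff ℝ (⊤ : ℕ∞) f)
    (hs : HasCompactSupport f) :
    ∃ B, ∀ (n : ℕ) (x : ℝ), |hermitePartialSum n f x - f x| ≤ B / ((n + 1 : ℕ) : ℝ) := by
  obtain ⟨C, hC⟩ := exists_abs_hermite_term_le hf hs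
  have hC0 : 0 ≤ C := by simpa using (abs_nonneg _).trans (hC 0 0)
  have hsum := summable_div_succ_pow C (show 1 < 2 by norm_num)
  refine ⟨∑' k : ℕ, C / ((k + 1 : ℕ) : ℝ) ^ 2, fun n x => ?_⟩
  have hx := hasSum_hermite hf hs x
  have htail := hx.summable.sum_add_tsum_nat_add (n + 1)
  rw [hx.tsum_eq] at htail
  rw [abs_sub_comm, hermitePartialSum, ← htail, add_sub_cancel_left, ← Real.norm_eq_abs]
  refine tsum_of_norm_bounded (hsum.hasSum.div_const ((n + 1 : ℕ) : ℝ)) fun k => ?_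
  refine (hC (k + (n + 1)) x).trans ?_
  rw [div_div]
  have hk : (0 : ℝ) < ((k + 1 : ℕ) : ℝ) := by positivity
  have hn : (0 : ℝ) < ((n + 1 : ℕ) : ℝ) := by positivity
  have h1 : ((k + 1 : ℕ) : ℝ) ≤ ((k + (n + 1) + 1 : ℕ) : ℝ) := by
    exact_mod_cast (by omega : k + 1 ≤ k + (n + 1) + 1)
  have h2 : ((n + 1 : ℕ) : ℝ) ≤ ((k + (n + 1) + 1 : ℕ) : ℝ) := by
    exact_mod_cast (by omega : n + 1 ≤ k + (n + 1) + 1)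
  refine div_le_div_of_nonneg_left hC0 (by positivity) ?_
  rw [pow_succ _ 2]
  gcongr

lemma eLpNorm_le_of_abs_le_of_eq_zero {F : ℝ → ℝ} {b t p : ℝ} (hb : 0 ≤ b) (ht : 0 < t)
    (hp : 1 < p) (hF : ∀ x, |F x| ≤ b) (hF0 : ∀ x, x ∉ Ioo (-t) t → F x = 0) :
    eLpNorm F (ENNReal.ofReal p) volume ≤ ENNReal.ofReal (b * (1 + 2 * t)) := by
  have h1 : eLpNorm F (ENNReal.ofReal p) volume ≤
      eLpNorm ((Ioo (-t) t).indicator fun _ => b) (ENNReal.ofReal p) volume :=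
    eLpNorm_mono_real fun x => by
      by_cases hx : x ∈ Ioo (-t) t
      · simpa [indicator_of_mem hx] using hF x
      · simp [indicator_of_notMem hx, hF0 x hx]
  refine h1.trans ?_
  have hp0 : 0 < p := by linarith
  rw [eLpNorm_indicator_const measurableSet_Ioo (by simpa using hp0) ENNReal.ofReal_ne_top,
    ENNReal.toReal_ofReal hp0.le, Real.volume_Ioo, Real.enorm_of_nonneg hb,
    ENNReal.ofReal_rpow_of_nonneg (by linarith) (by positivity), ← ENNReal.ofReal_mul hb]
  refine ENNReal.ofReal_le_ofReal (mul_le_mul_of_nonneg_left ?_ hb)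
  calc (t - -t) ^ (1 / p) ≤ (1 + 2 * t) ^ (1 / p) := by
        gcongr
        · linarith
        · linarith
    _ ≤ (1 + 2 * t) ^ (1 : ℝ) :=
        Real.rpow_le_rpow_of_exponent_le (by linarith) ((div_le_one hp0).2 hp.le)
    _ = _ := Real.rpow_one _

/-- **`L^p` convergence of truncated Hermite sums of a smooth compactly supported
function.** -/
theorem hermite_smooth_Lp_convergence (f : ℝ → ℝ)
    (hf : ContDiff ℝ (⊤ : ℕ∞) f) (hsupp : HasCompactSupport f)
    (p : ℝ) (hp : 1 < p)
    (T : ℕ → ℝ) (hTpos : ∀ n, 0 < T n)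
    (hTinf : Tendsto T atTop atTop)
    (hTslow : Tendsto (fun n : ℕ => T n / (n : ℝ) ^ ((1 : ℝ) / 34)) atTop (nhds 0)) :
    Tendsto (fun n : ℕ =>
        eLpNorm (fun x : ℝ =>
            Set.indicator (Set.Ioo (-(T n)) (T n)) (hermitePartialSum n f) x - f x)
          (ENNReal.ofReal p) volume)
      atTop (nhds 0) := by
  obtain ⟨B, hB⟩ := exists_abs_hermitePartialSum_sub_le hf hsupp
  have hB0 : 0 ≤ B := by simpa using (abs_nonneg _).trans (hB 0 0)
  obtain ⟨R, hR⟩ := hsupp.isCompact.isBounded.subset_closedBall 0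
  have hone : Tendsto (fun n : ℕ => (1 : ℝ) / ((n + 1 : ℕ) : ℝ)) atTop (nhds 0) := by
    simpa using tendsto_one_div_add_atTop_nhds_zero_nat (𝕜 := ℝ)
  have hT : Tendsto (fun n : ℕ => T n / ((n + 1 : ℕ) : ℝ)) atTop (nhds 0) := by
    refine squeeze_zero' (Eventually.of_forall fun n => div_nonneg (hTpos n).le (by positivity)) ?_
      hTslow
    filter_upwards [eventually_ge_atTop 1] with n hn
    have hn1 : (1 : ℝ) ≤ n := by exact_mod_cast hn
    refine div_le_div_of_nonneg_left (hTpos n).le (by positivity) ?_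
    calc (n : ℝ) ^ ((1 : ℝ) / 34) ≤ (n : ℝ) ^ (1 : ℝ) :=
          Real.rpow_le_rpow_of_exponent_le hn1 (by norm_num)
      _ ≤ ((n + 1 : ℕ) : ℝ) := by rw [Real.rpow_one]; push_cast; linarith
  have hlim : Tendsto (fun n : ℕ => ENNReal.ofReal (B / ((n + 1 : ℕ) : ℝ) * (1 + 2 * T n)))
      atTop (nhds 0) := by
    rw [← ENNReal.ofReal_zero]
    refine ENNReal.tendsto_ofReal ?_
    have := (hone.add (hT.const_mul 2)).const_mul B
    rw [mul_zero, add_zero, mul_zero] at this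
    refine this.congr fun n => ?_
    ring
  refine tendsto_of_tendsto_of_tendsto_of_le_of_le' tendsto_const_nhds hlim
    (Eventually.of_forall fun _ => bot_le) ?_
  filter_upwards [hTinf.eventually_gt_atTop R] with n hn
  have hout : ∀ x, x ∉ Ioo (-(T n)) (T n) → f x = 0 := fun x hx => by
    by_contra hfx
    have := hR (subset_tsupport f hfx)
    rw [mem_closedBall_zero_iff, Real.norm_eq_abs] at this
    exact hx (abs_lt.1 (this.trans_lt hn))
  refine eLpNorm_le_of_abs_le_of_eq_zero (by positivity) (hTpos n) hp (fun x => ?_) fun x hx => ?_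
  · by_cases hx : x ∈ Ioo (-(T n)) (T n)
    · rw [indicator_of_mem hx]
      exact hB n x
    · rw [indicator_of_notMem hx, hout x hx, sub_zero, abs_zero]
      positivity
  · rw [indicator_of_notMem hx, hout x hx, sub_zero]
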